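/- Picone identity with base B: suppose s₀ > 0 satisfies the free boundary condition tanh(φ(s₀)) = B(s₀)·K/(a·sinh(2s₀)), and let r := arcosh(A(s₀)·cosh(φ(s₀))). Then for every integer k and every continuously differentiable h : [−s₀, s₀] → ℝ with h'(s₀) = 0 and h'(−s₀) = 0, one has S_k(B·h) = ∫_{−s₀}^{s₀} ( B(s)³·h'(s)² + ((k² − 1)·B(s)² − 2·K²)·h(s)²/B(s) ) ds. -/

import Mathlib

namespace MoriCatenoid

/-- Profile function `B(s) = √(a·cosh(2s) − 1/2)` of the Mori family. -/
noncomputable def B (a s : ℝ) : ℝ := Real.sqrt (a * Real.cosh (2 * s) - 1 / 2)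

/-- Profile function `A(s) = √(a·cosh(2s) + 1/2)` of the Mori family. -/
noncomputable def A (a s : ℝ) : ℝ := Real.sqrt (a * Real.cosh (2 * s) + 1 / 2)

/-- The constant `K = √(a² − 1/4)`. -/
noncomputable def K (a : ℝ) : ℝ := Real.sqrt (a ^ 2 - 1 / 4)

/-- The angle function `φ(s) = K·∫₀ˢ dt/(A(t)²·B(t))`. -/
noncomputable def φ (a s : ℝ) : ℝ := K a * ∫ t in (0:ℝ)..s, 1 / ((A a t) ^ 2 * B a t)

/-- The mode-one Jacobi field `f_*(s) = d/ds (A(s)·cosh(φ(s)))`. -/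
noncomputable def fstar (a s : ℝ) : ℝ := deriv (fun t => A a t * Real.cosh (φ a t)) s

/-- Squared norm of the second fundamental form, `|II|²(s) = 2·(B''(s)/B(s) − 1)`. -/
noncomputable def IIsq (a s : ℝ) : ℝ := 2 * (deriv (deriv (B a)) s / B a s - 1)

/-- The mode-`k` potential `W_k(s) = |II|²(s) − 2 − k²/B(s)²`. -/
noncomputable def W (a : ℝ) (k : ℤ) (s : ℝ) : ℝ := IIsq a s - 2 - (k : ℝ) ^ 2 / (B a s) ^ 2

/-- Inverse hyperbolic cosine: `arcosh x = log (x + √(x² − 1))`. -/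
noncomputable def arcosh (x : ℝ) : ℝ := Real.log (x + Real.sqrt (x ^ 2 - 1))

/-- The axial boost field `u_*(s) = −a·sinh(2s)/B(s)`. -/
noncomputable def ustar (a s : ℝ) : ℝ := -a * Real.sinh (2 * s) / B a s

/-- The radial quadratic form of mode `k`:
`S_k(u) = ∫_{−s₀}^{s₀} (B·u'² − B·W_k·u²) − coth(r)·B(s₀)·(u(s₀)² + u(−s₀)²)`,
where `u'` is the derivative of `u` within `[−s₀, s₀]`. -/
noncomputable def Sk (a s₀ r : ℝ) (k : ℤ) (u : ℝ → ℝ) : ℝ :=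
  (∫ s in (-s₀)..s₀,
      (B a s * (derivWithin u (Set.Icc (-s₀) s₀) s) ^ 2 - B a s * W a k s * u s ^ 2))
    - Real.cosh r / Real.sinh r * B a s₀ * (u s₀ ^ 2 + u (-s₀) ^ 2)

/-!
Substituting `u = v·h` in `S_k` and integrating `(B·v')'` by parts against `v·h²` gives
`S_k(v·h) = ∫ (B·v²·h'² − (L_k v)·v·h²)` plus boundary terms proportional to the Robin defect of `v`
at `±s₀`, where `L_k` is the radial Jacobi operator. For `v = B` the flux `B·B'` is `a·sinh(2s)`,
and the first integral `B'² = A² − K²/B²` does the rest: it evaluates `L_k B`, and it turns the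
free boundary condition, which reads `tanh φ(s₀) = K / B'(s₀)`, into the Robin condition
`B'(s₀) = coth(r)·B(s₀)`, so that the boundary terms vanish.
-/

theorem odd_deriv_of_even {𝕜 F : Type*} [NontriviallyNormedField 𝕜] [NormedAddCommGroup F]
    [NormedSpace 𝕜 F] {f : 𝕜 → F} (hf : Function.Even f) : Function.Odd (deriv f) := fun x => by
  rw [← neg_neg (deriv f (-x)), ← deriv_comp_neg, funext hf]

/-- Jacobi's substitution `u = v·h` in `∫ (p·u'² − V·u²)`, obtained by integrating the derivative
`q` of the flux `p·v'` by parts against `v·h²`. -/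
theorem integral_mul_sq_deriv_mul_sub {α β : ℝ} {p v v' q V h h' : ℝ → ℝ}
    (hp : ContinuousOn p (Set.uIcc α β)) (hv' : ContinuousOn v' (Set.uIcc α β))
    (hq : ContinuousOn q (Set.uIcc α β)) (hV : ContinuousOn V (Set.uIcc α β))
    (hh' : ContinuousOn h' (Set.uIcc α β))
    (hv : ∀ s ∈ Set.uIcc α β, HasDerivWithinAt v (v' s) (Set.uIcc α β) s)
    (hflux : ∀ s ∈ Set.uIcc α β, HasDerivWithinAt (fun t => p t * v' t) (q s) (Set.uIcc α β) s)
    (hh : ∀ s ∈ Set.uIcc α β, HasDerivWithinAt h (h' s) (Set.uIcc α β) s) :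
    ∫ s in α..β, (p s * (v' s * h s + v s * h' s) ^ 2 - V s * (v s * h s) ^ 2)
      = (∫ s in α..β, (p s * v s ^ 2 * h' s ^ 2 - (q s + V s * v s) * v s * h s ^ 2))
        + (p β * v' β * (v β * h β ^ 2) - p α * v' α * (v α * h α ^ 2)) := by
  have hvc : ContinuousOn v (Set.uIcc α β) := fun s hs => (hv s hs).continuousWithinAt
  have hhc : ContinuousOn h (Set.uIcc α β) := fun s hs => (hh s hs).continuousWithinAt
  have hvh : ∀ s ∈ Set.uIcc α β, HasDerivWithinAt (fun t => v t * h t ^ 2)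
      (v' s * h s ^ 2 + v s * (2 * h s * h' s)) (Set.uIcc α β) s := fun s hs => by
    simpa using (hv s hs).fun_mul ((hh s hs).fun_pow 2)
  have hvh_int : IntervalIntegrable (fun s => v' s * h s ^ 2 + v s * (2 * h s * h' s))
      MeasureTheory.volume α β := ContinuousOn.intervalIntegrable (by fun_prop)
  have by_parts := intervalIntegral.integral_deriv_mul_eq_sub_of_hasDerivWithinAt
    hflux hvh hq.intervalIntegrable hvh_int
  rw [← by_parts, ← intervalIntegral.integral_add
    (ContinuousOn.intervalIntegrable (by fun_prop))
    (ContinuousOn.intervalIntegrable (by fun_prop))]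
  exact intervalIntegral.integral_congr fun s _ => by ring

section Profile

variable {a : ℝ}

theorem K_sq (ha : 1 / 2 < a) : K a ^ 2 = a ^ 2 - 1 / 4 :=
  Real.sq_sqrt (by nlinarith)

theorem B_radicand_pos (ha : 1 / 2 < a) (s : ℝ) : 0 < a * Real.cosh (2 * s) - 1 / 2 := by
  nlinarith [Real.one_le_cosh (2 * s)]

theorem B_pos (ha : 1 / 2 < a) (s : ℝ) : 0 < B a s :=
  Real.sqrt_pos.2 (B_radicand_pos ha s)

theorem B_sq (ha : 1 / 2 < a) (s : ℝ) : B a s ^ 2 = a * Real.cosh (2 * s) - 1 / 2 :=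
  Real.sq_sqrt (B_radicand_pos ha s).le

theorem A_sq (ha : 1 / 2 < a) (s : ℝ) : A a s ^ 2 = B a s ^ 2 + 1 := by
  rw [B_sq ha, A, Real.sq_sqrt (by linarith [B_radicand_pos ha s])]
  ring

theorem one_le_A (ha : 1 / 2 < a) (s : ℝ) : 1 ≤ A a s :=
  Real.one_le_sqrt.2 (by linarith [B_radicand_pos ha s, B_sq ha s, A_sq ha s])

theorem B_even (a : ℝ) : Function.Even (B a) := fun s => by
  rw [B, B, mul_neg, Real.cosh_neg]

theorem hasDerivAt_B (ha : 1 / 2 < a) (s : ℝ) :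
    HasDerivAt (B a) (a * Real.sinh (2 * s) / B a s) s := by
  have hcosh : HasDerivAt (fun t => a * Real.cosh (2 * t) - 1 / 2)
      (a * (Real.sinh (2 * s) * 2)) s :=
    ((hasDerivAt_const_mul 2).cosh.const_mul a).sub_const _
  refine (hcosh.sqrt (B_radicand_pos ha s).ne').congr_deriv ?_
  rw [← B]
  field_simp

theorem deriv_B (ha : 1 / 2 < a) (s : ℝ) : deriv (B a) s = a * Real.sinh (2 * s) / B a s :=
  (hasDerivAt_B ha s).deriv

theorem B_mul_deriv_B (ha : 1 / 2 < a) (s : ℝ) :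
    B a s * deriv (B a) s = a * Real.sinh (2 * s) := by
  rw [deriv_B ha, mul_div_cancel₀ _ (B_pos ha s).ne']

theorem deriv_B_pos (ha : 1 / 2 < a) {s : ℝ} (hs : 0 < s) : 0 < deriv (B a) s := by
  rw [deriv_B ha]
  exact div_pos (mul_pos (by linarith) (Real.sinh_pos_iff.2 (by positivity))) (B_pos ha s)

theorem contDiff_B (ha : 1 / 2 < a) {n : WithTop ℕ∞} : ContDiff ℝ n (B a) :=
  ContDiff.sqrt (by fun_prop) fun s => (B_radicand_pos ha s).ne'

theorem sq_deriv_B (ha : 1 / 2 < a) (s : ℝ) :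
    deriv (B a) s ^ 2 = A a s ^ 2 - K a ^ 2 / B a s ^ 2 := by
  have hB := B_pos ha s
  have hsq : (B a s * deriv (B a) s) ^ 2 = (B a s ^ 2 + 1) * B a s ^ 2 - K a ^ 2 := by
    rw [B_mul_deriv_B ha, B_sq ha, K_sq ha]
    linear_combination -a ^ 2 * Real.cosh_sq (2 * s)
  rw [A_sq ha]
  field_simp
  linear_combination hsq

theorem hasDerivAt_B_mul_deriv_B (ha : 1 / 2 < a) (s : ℝ) :
    HasDerivAt (fun t => B a t * deriv (B a) t) (2 * B a s ^ 2 + 1) s := by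
  rw [funext (B_mul_deriv_B ha)]
  refine ((hasDerivAt_const_mul 2).sinh.const_mul a).congr_deriv ?_
  linear_combination -2 * B_sq ha s

theorem deriv_deriv_B (ha : 1 / 2 < a) (s : ℝ) :
    deriv (deriv (B a)) s = (2 * B a s ^ 2 + 1 - deriv (B a) s ^ 2) / B a s := by
  have hB := B_pos ha s
  have hquot : deriv (B a) = fun t => B a t * deriv (B a) t / B a t :=
    funext fun t => (mul_div_cancel_left₀ _ (B_pos ha t).ne').symm
  have hderiv := (hasDerivAt_B_mul_deriv_B ha s).fun_div (hasDerivAt_B ha s) hB.ne'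
  rw [← hquot, ← deriv_B ha] at hderiv
  rw [hderiv.deriv]
  field_simp

theorem W_eq (ha : 1 / 2 < a) (k : ℤ) (s : ℝ) :
    W a k s = 2 * K a ^ 2 / B a s ^ 4 - 2 - k ^ 2 / B a s ^ 2 := by
  have hB := B_pos ha s
  rw [W, IIsq, deriv_deriv_B ha, sq_deriv_B ha, A_sq ha]
  field_simp
  ring

theorem continuous_W (ha : 1 / 2 < a) (k : ℤ) : Continuous (W a k) := by
  have hB := (contDiff_B ha (n := 0)).continuous
  have hB0 : ∀ s, B a s ≠ 0 := fun s => (B_pos ha s).ne'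
  rw [funext (W_eq ha k)]
  fun_prop (disch := simp [hB0])

end Profile

section RadialForm

variable {a : ℝ}

/-- The radial Jacobi operator `L_k u = (B·u')' + B·W_k·u` of mode `k`, the Sturm–Liouville operator
of the quadratic form `S_k`.
No factor `1/B` is divided out. -/
noncomputable def jacobiOp (a : ℝ) (k : ℤ) (u : ℝ → ℝ) (s : ℝ) : ℝ :=
  deriv (fun t => B a t * deriv u t) s + B a s * W a k s * u s

theorem jacobiOp_B (ha : 1 / 2 < a) (k : ℤ) (s : ℝ) :
    jacobiOp a k (B a) s = (2 * K a ^ 2 - ((k : ℝ) ^ 2 - 1) * B a s ^ 2) / B a s ^ 2 := by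
  have hB := B_pos ha s
  rw [jacobiOp, (hasDerivAt_B_mul_deriv_B ha s).deriv, W_eq ha]
  field_simp
  ring

theorem Sk_mul (ha : 1 / 2 < a) {s₀ : ℝ} (hs₀ : 0 < s₀) (r : ℝ) (k : ℤ) {v h : ℝ → ℝ}
    (hv : ContDiff ℝ 2 v) (hh : ContDiffOn ℝ 1 h (Set.Icc (-s₀) s₀)) :
    Sk a s₀ r k (fun s => v s * h s)
      = (∫ s in (-s₀)..s₀,
          (B a s * v s ^ 2 * derivWithin h (Set.Icc (-s₀) s₀) s ^ 2
            - jacobiOp a k v s * v s * h s ^ 2))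
        + B a s₀ * ((deriv v s₀ - Real.cosh r / Real.sinh r * v s₀) * v s₀ * h s₀ ^ 2
          - (deriv v (-s₀) + Real.cosh r / Real.sinh r * v (-s₀)) * v (-s₀) * h (-s₀) ^ 2) := by
  have hIcc : Set.uIcc (-s₀) s₀ = Set.Icc (-s₀) s₀ := Set.uIcc_of_le (by linarith)
  have hunique : UniqueDiffOn ℝ (Set.Icc (-s₀) s₀) := uniqueDiffOn_Icc (by linarith)
  have hvd (s : ℝ) : HasDerivAt v (deriv v s) s :=
    (hv.differentiable two_ne_zero s).hasDerivAt
  have hhd : ∀ s ∈ Set.Icc (-s₀) s₀,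
      HasDerivWithinAt h (derivWithin h (Set.Icc (-s₀) s₀) s) (Set.Icc (-s₀) s₀) s :=
    fun s hs => (hh.differentiableOn one_ne_zero s hs).hasDerivWithinAt
  have hv' : ContDiff ℝ 1 (deriv v) := ContDiff.deriv' hv
  have hflux : ContDiff ℝ 1 (fun t => B a t * deriv v t) := (contDiff_B ha).mul hv'
  have hBc : Continuous (B a) := (contDiff_B ha (n := 0)).continuous
  have jacobi := integral_mul_sq_deriv_mul_sub (α := -s₀) (β := s₀)
    (V := fun s => B a s * W a k s) (h' := derivWithin h (Set.Icc (-s₀) s₀))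
    hBc.continuousOn hv'.continuous.continuousOn
    (hflux.continuous_deriv le_rfl).continuousOn (hBc.mul (continuous_W ha k)).continuousOn
    (by rw [hIcc]; exact hh.continuousOn_derivWithin hunique le_rfl)
    (fun s _ => (hvd s).hasDerivWithinAt)
    (fun s _ => (hflux.differentiable one_ne_zero s).hasDerivAt.hasDerivWithinAt)
    (by rwa [hIcc])
  have integrand_eq : ∀ s ∈ Set.uIcc (-s₀) s₀,
      B a s * derivWithin (fun t => v t * h t) (Set.Icc (-s₀) s₀) s ^ 2
          - B a s * W a k s * (v s * h s) ^ 2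
        = B a s * (deriv v s * h s + v s * derivWithin h (Set.Icc (-s₀) s₀) s) ^ 2
          - B a s * W a k s * (v s * h s) ^ 2 := fun s hs => by
    rw [hIcc] at hs
    rw [((hvd s).hasDerivWithinAt.fun_mul (hhd s hs)).derivWithin (hunique s hs)]
  rw [Sk, intervalIntegral.integral_congr integrand_eq, jacobi, B_even]
  simp only [jacobiOp]
  ring

theorem Sk_B_mul (ha : 1 / 2 < a) {s₀ : ℝ} (hs₀ : 0 < s₀) (r : ℝ) (k : ℤ) {h : ℝ → ℝ}
    (hh : ContDiffOn ℝ 1 h (Set.Icc (-s₀) s₀)) :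
    Sk a s₀ r k (fun s => B a s * h s)
      = (∫ s in (-s₀)..s₀,
          (B a s ^ 3 * derivWithin h (Set.Icc (-s₀) s₀) s ^ 2
            + (((k : ℝ) ^ 2 - 1) * B a s ^ 2 - 2 * K a ^ 2) * h s ^ 2 / B a s))
        + (deriv (B a) s₀ - Real.cosh r / Real.sinh r * B a s₀) * B a s₀ ^ 2
          * (h s₀ ^ 2 + h (-s₀) ^ 2) := by
  have integrand_eq : ∀ s ∈ Set.uIcc (-s₀) s₀,
      B a s * B a s ^ 2 * derivWithin h (Set.Icc (-s₀) s₀) s ^ 2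
          - jacobiOp a k (B a) s * B a s * h s ^ 2
        = B a s ^ 3 * derivWithin h (Set.Icc (-s₀) s₀) s ^ 2
          + (((k : ℝ) ^ 2 - 1) * B a s ^ 2 - 2 * K a ^ 2) * h s ^ 2 / B a s := fun s _ => by
    have hB := B_pos ha s
    rw [jacobiOp_B ha]
    field_simp
    ring
  rw [Sk_mul ha hs₀ r k (contDiff_B ha) hh, intervalIntegral.integral_congr integrand_eq,
    odd_deriv_of_even (B_even a), B_even]
  ring

end RadialForm

section FreeBoundary

variable {a s θ : ℝ}

theorem sq_A_mul_cosh_mul_sub (ha : 1 / 2 < a) (hs : 0 < s)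
    (hθ : Real.tanh θ = K a / deriv (B a) s) :
    (A a s * Real.cosh θ) ^ 2 * (deriv (B a) s ^ 2 - B a s ^ 2) = deriv (B a) s ^ 2 := by
  have hB := B_pos ha s
  have hB' := deriv_B_pos ha hs
  have hC := Real.cosh_pos θ
  have hsinh : Real.sinh θ * deriv (B a) s = K a * Real.cosh θ := by
    rwa [Real.tanh_eq_sinh_div_cosh, div_eq_div_iff hC.ne' hB'.ne'] at hθ
  have hcosh : Real.cosh θ ^ 2 * (deriv (B a) s ^ 2 - K a ^ 2) = deriv (B a) s ^ 2 := by
    linear_combination deriv (B a) s ^ 2 * Real.cosh_sq θ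
      + (Real.sinh θ * deriv (B a) s + K a * Real.cosh θ) * hsinh
  have hA : A a s ^ 2 * (deriv (B a) s ^ 2 - B a s ^ 2) = deriv (B a) s ^ 2 - K a ^ 2 := by
    rw [sq_deriv_B ha, A_sq ha]
    field_simp
    ring
  linear_combination hcosh + Real.cosh θ ^ 2 * hA

theorem coth_arcosh_A_mul_cosh (ha : 1 / 2 < a) (hs : 0 < s)
    (hθ : Real.tanh θ = K a / deriv (B a) s) :
    Real.cosh (arcosh (A a s * Real.cosh θ)) / Real.sinh (arcosh (A a s * Real.cosh θ))
      = deriv (B a) s / B a s := by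
  have hB := B_pos ha s
  have hB' := deriv_B_pos ha hs
  have hx : 1 ≤ A a s * Real.cosh θ :=
    one_le_mul_of_one_le_of_one_le (one_le_A ha s) (Real.one_le_cosh θ)
  set r := arcosh (A a s * Real.cosh θ)
  have hcosh : Real.cosh r = A a s * Real.cosh θ := Real.cosh_arcosh hx
  have hsinh : 0 ≤ Real.sinh r := Real.sinh_nonneg_iff.2 (Real.arcosh_nonneg hx)
  have hsq : (Real.cosh r * B a s) ^ 2 = (deriv (B a) s * Real.sinh r) ^ 2 := by
    have hx_sq := sq_A_mul_cosh_mul_sub ha hs hθ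
    rw [← hcosh] at hx_sq
    linear_combination deriv (B a) s ^ 2 * Real.cosh_sq r - hx_sq
  have hmul : Real.cosh r * B a s = deriv (B a) s * Real.sinh r :=
    (sq_eq_sq₀ (by positivity) (by positivity)).1 hsq
  have hsinh_ne : Real.sinh r ≠ 0 := fun h0 => by
    rw [h0, mul_zero] at hmul
    exact (mul_pos (Real.cosh_pos r) hB).ne' hmul
  rwa [div_eq_div_iff hsinh_ne hB.ne']

end FreeBoundary

theorem picone_identity_baseB_general (a : ℝ) (ha : 1 / 2 < a) (s₀ : ℝ) (hs₀ : 0 < s₀)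
    (hFBC : Real.tanh (φ a s₀) = B a s₀ * K a / (a * Real.sinh (2 * s₀)))
    (r : ℝ) (hr : r = arcosh (A a s₀ * Real.cosh (φ a s₀)))
    (k : ℤ) (h : ℝ → ℝ) (hh : ContDiffOn ℝ 1 h (Set.Icc (-s₀) s₀)) :
    Sk a s₀ r k (fun s => B a s * h s)
      = ∫ s in (-s₀)..s₀,
          (B a s ^ 3 * (derivWithin h (Set.Icc (-s₀) s₀) s) ^ 2
            + (((k : ℝ) ^ 2 - 1) * B a s ^ 2 - 2 * K a ^ 2) * h s ^ 2 / B a s) := by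
  have hB := B_pos ha s₀
  have hθ : Real.tanh (φ a s₀) = K a / deriv (B a) s₀ := by
    rw [hFBC, ← B_mul_deriv_B ha, mul_div_mul_left _ _ hB.ne']
  have robin : deriv (B a) s₀ - Real.cosh r / Real.sinh r * B a s₀ = 0 := by
    rw [hr, coth_arcosh_A_mul_cosh ha hs₀ hθ, div_mul_cancel₀ _ hB.ne', sub_self]
  rw [Sk_B_mul ha hs₀ r k hh, robin, zero_mul, zero_mul, add_zero]

/-- Picone identity with base `B`: under the free boundary condition, for every
integer `k` and every `C¹` function `h` on `[−s₀, s₀]` with `h'(±s₀) = 0`,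
`S_k(B·h) = ∫ (B³·h'² + ((k² − 1)·B² − 2·K²)·h²/B)`. -/
theorem picone_identity_baseB (a : ℝ) (ha : 1 / 2 < a) (s₀ : ℝ) (hs₀ : 0 < s₀)
    (hFBC : Real.tanh (φ a s₀) = B a s₀ * K a / (a * Real.sinh (2 * s₀)))
    (r : ℝ) (hr : r = arcosh (A a s₀ * Real.cosh (φ a s₀)))
    (k : ℤ) (h : ℝ → ℝ) (hh : ContDiffOn ℝ 1 h (Set.Icc (-s₀) s₀))
    (hd1 : derivWithin h (Set.Icc (-s₀) s₀) s₀ = 0)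
    (hd2 : derivWithin h (Set.Icc (-s₀) s₀) (-s₀) = 0) :
    Sk a s₀ r k (fun s => B a s * h s)
      = ∫ s in (-s₀)..s₀,
          (B a s ^ 3 * (derivWithin h (Set.Icc (-s₀) s₀) s) ^ 2
            + (((k : ℝ) ^ 2 - 1) * B a s ^ 2 - 2 * K a ^ 2) * h s ^ 2 / B a s) :=
  picone_identity_baseB_general a ha s₀ hs₀ hFBC r hr k h hh

end MoriCatenoid
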